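/- For every n ≥ 1, the number of Latin squares of order n satisfies the lower bound L(n) ≥ (n!)^{2n} / n^{n²}. -/

import Mathlib

/-- The number of Latin squares of order `n`: functions `L : {1,…,n}² → {1,…,n}`
whose every row and every column is a bijection. -/
noncomputable def latinSquareCount (n : ℕ) : ℕ :=
  Nat.card {L : Fin n → Fin n → Fin n //
    (∀ i, Function.Bijective (L i)) ∧ (∀ j, Function.Bijective fun i => L i j)}

/-!
Build a Latin square row by row. The possible next rows of a Latin rectangle with `r` rows are
counted by the permanent of a 0/1 matrix all of whose row and column sums are `n - r`, which by the
van der Waerden bound is at least `n! * (n - r)^n / n^n`. The product over `r < n` of these bounds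
is `(n!)^(2n) / n^(n²)`.

The van der Waerden bound is proved by Gurvits's capacity method: a positive matrix `A` with
`∏ j, x j ≤ ∏ i, (A x) i` for all positive `x` has permanent at least `n! / n^n`, and for a doubly
stochastic matrix this hypothesis is the weighted AM–GM inequality. The columns of `A` are split off
one at a time. Each step uses that the mixed permanents `D(y, …, y, z, …, z, …)` form a log-concave
sequence, which is Alexandrov's inequality `D(x, x, …) D(y, y, …) ≤ D(x, y, …)²`. The latter says
that a symmetric form is negative semidefinite on a hyperplane, which follows by induction on the
dimension from a spectral argument (the Bochner method of Shenfeld and van Handel).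
-/

open Finset Matrix

section QuadraticForms

variable {κ : Type*} [Fintype κ] {A : Matrix κ κ ℝ}

lemma dotProduct_mulVec_comm_of_isSymm {R : Type*} [CommSemiring R] {A : Matrix κ κ R}
    (hA : A.IsSymm) (x y : κ → R) :
    x ⬝ᵥ A *ᵥ y = y ⬝ᵥ A *ᵥ x := by
  rw [dotProduct_mulVec, ← mulVec_transpose, hA.eq, dotProduct_comm]

lemma dotProduct_mulVec_nonpos_of_orthogonal_eigenvectors (hA : A.IsSymm) {v : κ → ℝ}
    (h : ∀ μ : ℝ, 0 < μ → ∀ u, A *ᵥ u = μ • u → u ⬝ᵥ v = 0) : v ⬝ᵥ A *ᵥ v ≤ 0 := by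
  classical
  have hA' : A.IsHermitian := isHermitian_iff_isSymm.2 hA
  let b := hA'.eigenvectorBasis
  have expansion : v ⬝ᵥ A *ᵥ v = ∑ k, hA'.eigenvalues k * (b k ⬝ᵥ v) ^ 2 := by
    have parseval := b.sum_inner_mul_inner (WithLp.toLp 2 v) (WithLp.toLp 2 (A *ᵥ v))
    simp only [EuclideanSpace.inner_eq_star_dotProduct, star_trivial] at parseval
    rw [dotProduct_comm, ← parseval]
    refine sum_congr rfl fun k _ => ?_
    rw [dotProduct_comm (A *ᵥ v), dotProduct_mulVec_comm_of_isSymm hA,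
      hA'.mulVec_eigenvectorBasis, dotProduct_smul, dotProduct_comm v, smul_eq_mul]
    ring
  rw [expansion]
  refine sum_nonpos fun k _ => ?_
  rcases le_or_gt (hA'.eigenvalues k) 0 with hk | hk
  · exact mul_nonpos_of_nonpos_of_nonneg hk (sq_nonneg _)
  · simp [h _ hk (b k) (hA'.mulVec_eigenvectorBasis k)]

lemma sum_mul_sq_sub_eq_of_mulVec_eq_self {𝕜 : Type*} [Field 𝕜] {A : Matrix κ κ 𝕜}
    (hA : A.IsSymm) {q : κ → 𝕜} (hq : ∀ i, q i ≠ 0) (hAq : A *ᵥ q = q) (u : κ → 𝕜) :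
    ∑ i, ∑ j, A i j * (q i * q j) * (u i / q i - u j / q j) ^ 2 =
      2 * (u ⬝ᵥ u - u ⬝ᵥ A *ᵥ u) := by
  have diagonal_term : ∑ i, ∑ j, A i j * q j * (u i ^ 2 / q i) = u ⬝ᵥ u := by
    refine sum_congr rfl fun i _ => ?_
    have hi := hq i
    rw [← sum_mul, show ∑ j, A i j * q j = q i from congrFun hAq i]
    field_simp
  have diagonal_term' : ∑ i, ∑ j, A i j * q i * (u j ^ 2 / q j) = u ⬝ᵥ u := by
    rw [sum_comm, ← diagonal_term]
    simp only [hA.apply]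
  have cross_term : ∑ i, ∑ j, A i j * (u i * u j) = u ⬝ᵥ A *ᵥ u := by
    simp only [dotProduct, mulVec, mul_sum]
    exact sum_congr rfl fun i _ => sum_congr rfl fun j _ => by ring
  calc
    _ = ∑ i, ∑ j, (A i j * q j * (u i ^ 2 / q i) + A i j * q i * (u j ^ 2 / q j)
          - 2 * (A i j * (u i * u j))) := by
      refine sum_congr rfl fun i _ => sum_congr rfl fun j _ => ?_
      have hi := hq i
      have hj := hq j
      field_simp
      ring
    _ = 2 * (u ⬝ᵥ u - u ⬝ᵥ A *ᵥ u) := by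
      simp only [sum_sub_distrib, sum_add_distrib, ← mul_sum]
      rw [diagonal_term, diagonal_term', cross_term]
      ring

lemma exists_eq_smul_of_mulVec_eq_smul (hA : A.IsSymm) (hpos : ∀ i j, i ≠ j → 0 < A i j)
    {q : κ → ℝ} (hq : ∀ i, 0 < q i) (hAq : A *ᵥ q = q) {μ : ℝ} (hμ : 1 ≤ μ) {u : κ → ℝ}
    (hu : A *ᵥ u = μ • u) : ∃ t : ℝ, u = t • q := by
  have term_nonneg (i j) : 0 ≤ A i j * (q i * q j) * (u i / q i - u j / q j) ^ 2 := by
    rcases eq_or_ne i j with rfl | hij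
    · simp
    · have := hpos i j hij
      have := hq i
      have := hq j
      positivity
  have total_nonpos : ∑ i, ∑ j, A i j * (q i * q j) * (u i / q i - u j / q j) ^ 2 ≤ 0 := by
    rw [sum_mul_sq_sub_eq_of_mulVec_eq_self hA (fun i => (hq i).ne') hAq, hu, dotProduct_smul,
      smul_eq_mul]
    nlinarith [show 0 ≤ u ⬝ᵥ u from dotProduct_self_star_nonneg u]
  have ratio_eq (i j) : u i / q i = u j / q j := by
    rcases eq_or_ne i j with rfl | hij
    · rfl
    have term_zero : A i j * (q i * q j) * (u i / q i - u j / q j) ^ 2 = 0 := by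
      refine (term_nonneg i j).antisymm' (le_trans ?_ total_nonpos)
      exact (single_le_sum (fun j _ => term_nonneg i j) (mem_univ j)).trans
        (single_le_sum (f := fun i => ∑ j, A i j * (q i * q j) * (u i / q i - u j / q j) ^ 2)
          (fun i _ => sum_nonneg fun j _ => term_nonneg i j) (mem_univ i))
    have weight_ne : A i j * (q i * q j) ≠ 0 :=
      (mul_pos (hpos i j hij) (mul_pos (hq i) (hq j))).ne'
    simpa [weight_ne, sub_eq_zero] using term_zero
  rcases isEmpty_or_nonempty κ with _ | ⟨⟨k⟩⟩
  · exact ⟨0, Subsingleton.elim _ _⟩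
  · refine ⟨u k / q k, funext fun i => ?_⟩
    rw [Pi.smul_apply, smul_eq_mul, ← ratio_eq i k, div_mul_cancel₀ _ (hq i).ne']

/- The quadratic inequality says `A ≤ A²`, so positive eigenvalues of `A` are at least `1`; by
positivity of the entries such an eigenvalue belongs to the line spanned by `q` only. -/
lemma dotProduct_mulVec_nonpos_of_mulVec_eq_self (hA : A.IsSymm)
    (hpos : ∀ i j, i ≠ j → 0 < A i j) {q : κ → ℝ} (hq : ∀ i, 0 < q i) (hAq : A *ᵥ q = q)
    (hsq : ∀ u, u ⬝ᵥ A *ᵥ u ≤ A *ᵥ u ⬝ᵥ A *ᵥ u) {v : κ → ℝ} (hv : q ⬝ᵥ v = 0) :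
    v ⬝ᵥ A *ᵥ v ≤ 0 := by
  refine dotProduct_mulVec_nonpos_of_orthogonal_eigenvectors hA fun μ hμ u hu => ?_
  rcases eq_or_ne u 0 with rfl | hu0
  · exact zero_dotProduct v
  have norm_pos : 0 < u ⬝ᵥ u := by
    simpa using dotProduct_star_self_pos_iff.2 hu0
  have one_le : 1 ≤ μ := by
    have := hsq u
    simp only [hu, dotProduct_smul, smul_dotProduct, smul_eq_mul] at this
    exact le_of_mul_le_mul_right (by linarith [le_of_mul_le_mul_left this hμ]) norm_pos
  obtain ⟨t, rfl⟩ := exists_eq_smul_of_mulVec_eq_smul hA hpos hq hAq one_le hu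
  rw [smul_dotProduct, hv, smul_zero]

/- Conjugating by the diagonal matrix with square `c / (A c)` reduces to the case `A c = c`. -/
lemma dotProduct_mulVec_nonpos_of_bochner (hA : A.IsSymm) (hpos : ∀ i j, i ≠ j → 0 < A i j)
    {c : κ → ℝ} (hc : ∀ i, 0 < c i) (hAc : ∀ i, 0 < (A *ᵥ c) i)
    (hbochner : ∀ u, u ⬝ᵥ A *ᵥ u ≤ ∑ i, c i / (A *ᵥ c) i * (A *ᵥ u) i ^ 2)
    {w : κ → ℝ} (hw : w ⬝ᵥ A *ᵥ c = 0) : w ⬝ᵥ A *ᵥ w ≤ 0 := by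
  classical
  let s : κ → ℝ := fun i => √(c i / (A *ᵥ c) i)
  have hs (i) : 0 < s i := Real.sqrt_pos.2 (div_pos (hc i) (hAc i))
  have s_sq (i) : s i ^ 2 = c i / (A *ᵥ c) i := Real.sq_sqrt (div_pos (hc i) (hAc i)).le
  let N : Matrix κ κ ℝ := diagonal s * A * diagonal s
  have N_mulVec (u : κ → ℝ) : N *ᵥ (u / s) = s * A *ᵥ u := by
    have hu : diagonal s *ᵥ (u / s) = u := by
      ext i
      rw [mulVec_diagonal, Pi.div_apply, mul_div_cancel₀ _ (hs i).ne']
    ext i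
    rw [← mulVec_mulVec, ← mulVec_mulVec, hu, mulVec_diagonal, Pi.mul_apply]
  have N_form (u : κ → ℝ) : (u / s) ⬝ᵥ N *ᵥ (u / s) = u ⬝ᵥ A *ᵥ u := by
    rw [N_mulVec]
    refine sum_congr rfl fun i _ => ?_
    have := (hs i).ne'
    simp only [Pi.div_apply, Pi.mul_apply]
    field_simp
  have s_mul_Ac : s * A *ᵥ c = c / s := by
    ext i
    have := (hs i).ne'
    have := (hAc i).ne'
    have := s_sq i
    simp only [Pi.mul_apply, Pi.div_apply]
    field_simp at this ⊢
    exact this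
  rw [← N_form]
  refine dotProduct_mulVec_nonpos_of_mulVec_eq_self (q := c / s) ?_ ?_
    (fun i => div_pos (hc i) (hs i)) ((N_mulVec c).trans s_mul_Ac) ?_ ?_
  · simp only [N, IsSymm, transpose_mul, diagonal_transpose, hA.eq, mul_assoc]
  · intro i j hij
    simpa [N] using mul_pos (mul_pos (hs i) (hpos i j hij)) (hs j)
  · intro u
    obtain ⟨u, rfl⟩ : ∃ u', u' / s = u :=
      ⟨u * s, funext fun i => mul_div_cancel_right₀ _ (hs i).ne'⟩
    rw [N_form, N_mulVec]
    refine (hbochner u).trans_eq (sum_congr rfl fun i _ => ?_)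
    rw [← s_sq, Pi.mul_apply]
    ring
  · rw [← s_mul_Ac, ← hw, dotProduct_comm]
    refine sum_congr rfl fun i _ => ?_
    have := (hs i).ne'
    simp only [Pi.div_apply, Pi.mul_apply]
    field_simp

lemma mul_dotProduct_mulVec_le_sq {𝕜 : Type*} [Field 𝕜] [LinearOrder 𝕜]
    [IsStrictOrderedRing 𝕜] {A : Matrix κ κ 𝕜} (hA : A.IsSymm) {p y : κ → 𝕜}
    (h : ∀ w, w ⬝ᵥ p = 0 → w ⬝ᵥ A *ᵥ w ≤ 0) (hyp : y ⬝ᵥ p ≠ 0) (hy : 0 ≤ y ⬝ᵥ A *ᵥ y)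
    (x : κ → 𝕜) : (x ⬝ᵥ A *ᵥ x) * (y ⬝ᵥ A *ᵥ y) ≤ (x ⬝ᵥ A *ᵥ y) ^ 2 := by
  let s := -(x ⬝ᵥ p) / (y ⬝ᵥ p)
  have orthogonal : (x + s • y) ⬝ᵥ p = 0 := by
    rw [add_dotProduct, smul_dotProduct, smul_eq_mul, div_mul_cancel₀ _ hyp, add_neg_cancel]
  have form_nonpos := h _ orthogonal
  simp only [mulVec_add, mulVec_smul, add_dotProduct, dotProduct_add, smul_dotProduct,
    dotProduct_smul, smul_eq_mul, dotProduct_mulVec_comm_of_isSymm hA y x] at form_nonpos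
  nlinarith [sq_nonneg (x ⬝ᵥ A *ᵥ y + s * (y ⬝ᵥ A *ᵥ y)),
    mul_le_mul_of_nonneg_left form_nonpos hy]

end QuadraticForms


section ColPermanent

variable {ι R : Type*} [DecidableEq ι]

/-- The permanent of the matrix with rows `S` and columns `l`, defined by Laplace expansion along
the first column. It is the permanent proper when `S` has as many elements as `l`; as a function
of its columns it is then the mixed permanent, i.e. the polarization of `y ↦ |S|! * ∏ i ∈ S, y i`.
Keeping rows as a finite set and columns as a list makes deletion of either a definitional step. -/
def colPermanent [CommSemiring R] : List (ι → R) → Finset ι → R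
  | [], _ => 1
  | a :: l, S => ∑ i ∈ S, a i * colPermanent l (S.erase i)

section Algebra

variable [CommSemiring R]

@[simp]
lemma colPermanent_nil (S : Finset ι) : colPermanent ([] : List (ι → R)) S = 1 := rfl

lemma colPermanent_cons (a : ι → R) (l : List (ι → R)) (S : Finset ι) :
    colPermanent (a :: l) S = ∑ i ∈ S, a i * colPermanent l (S.erase i) := rfl

lemma colPermanent_swap (a b : ι → R) (l : List (ι → R)) (S : Finset ι) :
    colPermanent (a :: b :: l) S = colPermanent (b :: a :: l) S := by
  simp only [colPermanent_cons, mul_sum]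
  rw [sum_comm' (t' := S) (s' := fun j => S.erase j) (by simp only [mem_erase]; tauto)]
  refine sum_congr rfl fun j _ => sum_congr rfl fun i _ => ?_
  rw [erase_right_comm]
  ring

lemma colPermanent_eq_of_perm {l l' : List (ι → R)} (h : l.Perm l') (S : Finset ι) :
    colPermanent l S = colPermanent l' S := by
  induction h generalizing S with
  | nil => rfl
  | cons a _ ih => simp only [colPermanent_cons, ih]
  | swap a b l => exact colPermanent_swap b a l S
  | trans _ _ ih₁ ih₂ => rw [ih₁, ih₂]

lemma colPermanent_add_smul (a b : ι → R) (t : R) (l : List (ι → R)) (S : Finset ι) :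
    colPermanent ((a + t • b) :: l) S = colPermanent (a :: l) S + t * colPermanent (b :: l) S := by
  simp only [colPermanent_cons, mul_sum, ← sum_add_distrib, Pi.add_apply, Pi.smul_apply,
    smul_eq_mul]
  exact sum_congr rfl fun i _ => by ring

lemma colPermanent_replicate (y : ι → R) (S : Finset ι) :
    colPermanent (List.replicate #S y) S = (#S).factorial * ∏ i ∈ S, y i := by
  induction hS : #S generalizing S with
  | zero => simp [card_eq_zero.1 hS]
  | succ n ih =>
    have expand_row (i) (hi : i ∈ S) :
        y i * colPermanent (List.replicate n y) (S.erase i) = n.factorial * ∏ i ∈ S, y i := by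
      rw [ih _ (by rw [card_erase_of_mem hi, hS, Nat.add_sub_cancel]), ← mul_prod_erase S y hi]
      ring
    rw [List.replicate_succ, colPermanent_cons, sum_congr rfl expand_row, sum_const, hS,
      nsmul_eq_mul, Nat.factorial_succ, Nat.cast_mul, mul_assoc]

lemma colPermanent_ofFn {m : ℕ} (a : Fin m → ι → R) (S : Finset ι) :
    colPermanent (List.ofFn a) S =
      ∑ f ∈ Fintype.piFinset fun _ : Fin m => S with Function.Injective f, ∏ j, a j (f j) := by
  induction m generalizing S with
  | zero => simp [Function.injective_of_subsingleton]
  | succ m ih =>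
    rw [List.ofFn_succ, colPermanent_cons]
    simp only [ih, mul_sum]
    rw [sum_sigma']
    refine sum_bij' (fun p _ => Fin.cons p.1 p.2) (fun f _ => ⟨f 0, Fin.tail f⟩) ?_ ?_
      (fun p _ => by simp) (fun f _ => by simp) (fun p _ => by simp [Fin.prod_univ_succ])
    · rintro ⟨i, f⟩ h
      simp only [mem_sigma, mem_filter, Fintype.mem_piFinset, mem_erase] at h
      simp only [mem_filter, Fintype.mem_piFinset, Fin.forall_fin_succ, Fin.cons_zero,
        Fin.cons_succ, Fin.cons_injective_iff, Set.mem_range, not_exists]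
      exact ⟨⟨h.1, fun j => (h.2.1 j).2⟩, fun j => (h.2.1 j).1, h.2.2⟩
    · intro f h
      simp only [mem_filter, Fintype.mem_piFinset] at h
      simp only [mem_sigma, mem_filter, Fintype.mem_piFinset, mem_erase, Fin.tail]
      exact ⟨h.1 0, fun j => ⟨h.2.ne (Fin.succ_ne_zero j), h.1 j.succ⟩,
        h.2.comp (Fin.succ_injective m)⟩

lemma permanent_eq_colPermanent [Fintype ι] (A : Matrix ι ι R) {n : ℕ} (e : Fin n ≃ ι) :
    A.permanent = colPermanent (List.ofFn fun j => A.col (e j)) univ := by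
  rw [colPermanent_ofFn]
  refine sum_bij (fun σ _ => σ ∘ e) (fun σ _ => ?_) (fun σ _ τ _ h => ?_) (fun f hf => ?_)
    (fun σ _ => (e.prod_comp fun i => A (σ i) i).symm)
  · simpa using σ.injective
  · exact DFunLike.coe_injective (e.surjective.injective_comp_right h)
  · have hf : Function.Injective (f ∘ e.symm) := (mem_filter.1 hf).2.comp e.symm.injective
    exact ⟨.ofBijective _ (Finite.injective_iff_bijective.1 hf), mem_univ _, by ext; simp⟩

/-- The matrix of the bilinear form `(x, y) ↦ colPermanent (x :: y :: l) S` on `R^S`. -/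
def colPermanentForm (l : List (ι → R)) (S : Finset ι) : Matrix S S R :=
  of fun i j => if i = j then 0 else colPermanent l ((S.erase i).erase j)

lemma colPermanentForm_isSymm (l : List (ι → R)) (S : Finset ι) :
    (colPermanentForm l S).IsSymm := by
  ext i j
  simp only [colPermanentForm, transpose_apply, of_apply, eq_comm (a := i), erase_right_comm]

lemma colPermanentForm_mulVec (l : List (ι → R)) (S : Finset ι) (w : ι → R) (i : S) :
    (colPermanentForm l S *ᵥ S.restrict w) i = colPermanent (w :: l) (S.erase i) := by
  let term (j : ι) : R := (if (i : ι) = j then 0 else colPermanent l ((S.erase i).erase j)) * w j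
  calc
    _ = ∑ j : S, term j := by
      simp only [mulVec, dotProduct, colPermanentForm, of_apply, Subtype.ext_iff, term, restrict]
    _ = ∑ j ∈ S.erase i, term j := by rw [sum_coe_sort S term, sum_erase S (by simp [term])]
    _ = _ := sum_congr rfl fun j hj => by
      simp only [term, if_neg (ne_of_mem_erase hj).symm, mul_comm]

lemma dotProduct_colPermanentForm_mulVec (l : List (ι → R)) (S : Finset ι) (w w' : ι → R) :
    S.restrict w ⬝ᵥ colPermanentForm l S *ᵥ S.restrict w' = colPermanent (w :: w' :: l) S := by
  simp only [dotProduct, colPermanentForm_mulVec, restrict]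
  exact sum_coe_sort S fun i => w i * colPermanent (w' :: l) (S.erase i)

end Algebra

section Positivity

variable [CommSemiring R] [PartialOrder R] [IsStrictOrderedRing R]

lemma colPermanent_pos {l : List (ι → R)} {S : Finset ι} (hS : l.length = #S)
    (hl : ∀ a ∈ l, ∀ i, 0 < a i) : 0 < colPermanent l S := by
  induction l generalizing S with
  | nil => exact one_pos
  | cons a l ih =>
    obtain ⟨ha, hl⟩ := List.forall_mem_cons.1 hl
    refine sum_pos (fun i hi => mul_pos (ha i) (ih ?_ hl)) (card_pos.1 (by simp [← hS]))
    rw [card_erase_of_mem hi, ← hS, List.length_cons, Nat.add_sub_cancel]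

lemma colPermanentForm_pos {l : List (ι → R)} {S : Finset ι} (hS : l.length + 2 = #S)
    (hl : ∀ a ∈ l, ∀ i, 0 < a i) {i j : S} (hij : i ≠ j) : 0 < colPermanentForm l S i j := by
  have hj : (j : ι) ∈ S.erase i := mem_erase.2 ⟨fun h => hij (Subtype.ext h.symm), j.2⟩
  rw [colPermanentForm, of_apply, if_neg hij]
  refine colPermanent_pos ?_ hl
  rw [card_erase_of_mem hj, card_erase_of_mem i.2, ← hS]
  rfl

end Positivity

lemma colPermanent_mul_le_sq_of_card_eq_two [CommRing R] [LinearOrder R] [IsStrictOrderedRing R]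
    {S : Finset ι} (hS : #S = 2) (x y : ι → R) :
    colPermanent [x, x] S * colPermanent [y, y] S ≤ colPermanent [x, y] S ^ 2 := by
  obtain ⟨i, j, hij, rfl⟩ := card_eq_two.1 hS
  have erase_left : ({i, j} : Finset ι).erase i = {j} := erase_insert (by simpa using hij)
  have erase_right : ({i, j} : Finset ι).erase j = {i} := by
    rw [pair_comm, erase_insert (by simpa using hij.symm)]
  simp only [colPermanent, sum_pair hij, erase_left, erase_right, sum_singleton, mul_one]
  nlinarith [sq_nonneg (x i * y j - x j * y i)]

/- Expanding along the column `c` and applying Alexandrov's inequality to each minor bounds the form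
by a weighted sum of squares, as the spectral criterion requires. -/
lemma colPermanent_self_nonpos_of_orthogonal {c : ι → ℝ} {l : List (ι → ℝ)} {S : Finset ι}
    (hS : l.length + 3 = #S) (hc : ∀ i, 0 < c i) (hl : ∀ a ∈ l, ∀ i, 0 < a i)
    (halexandrov : ∀ i ∈ S, ∀ w, colPermanent (w :: w :: l) (S.erase i) *
      colPermanent (c :: c :: l) (S.erase i) ≤ colPermanent (w :: c :: l) (S.erase i) ^ 2)
    {w : S → ℝ} (hw : w ⬝ᵥ colPermanentForm (c :: l) S *ᵥ S.restrict c = 0) :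
    w ⬝ᵥ colPermanentForm (c :: l) S *ᵥ w ≤ 0 := by
  have hcl : ∀ a ∈ c :: l, ∀ i, 0 < a i := List.forall_mem_cons.2 ⟨hc, hl⟩
  have minor_pos (i : S) : 0 < colPermanent (c :: c :: l) (S.erase i) := by
    refine colPermanent_pos ?_ (List.forall_mem_cons.2 ⟨hc, hcl⟩)
    rw [card_erase_of_mem i.2, ← hS]
    rfl
  refine dotProduct_mulVec_nonpos_of_bochner (colPermanentForm_isSymm _ S)
    (fun i j hij => colPermanentForm_pos (by simpa using hS) hcl hij)
    (c := S.restrict c) (fun i => hc i) ?_ ?_ hw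
  · simpa only [colPermanentForm_mulVec] using minor_pos
  · intro u
    obtain ⟨u, rfl⟩ : ∃ u' : ι → ℝ, S.restrict u' = u :=
      ⟨Function.extend Subtype.val u 0, funext (Subtype.val_injective.extend_apply u 0)⟩
    have move_c : colPermanent (u :: u :: c :: l) S = colPermanent (c :: u :: u :: l) S :=
      colPermanent_eq_of_perm (List.perm_middle (l₁ := [u, u])) S
    simp only [dotProduct_colPermanentForm_mulVec, colPermanentForm_mulVec]
    rw [move_c, colPermanent_cons, ← sum_coe_sort S]
    refine sum_le_sum fun i _ => ?_
    rw [div_mul_eq_mul_div, mul_div_assoc]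
    exact mul_le_mul_of_nonneg_left ((le_div_iff₀ (minor_pos i)).2 (halexandrov i i.2 u)) (hc i).le

theorem colPermanent_mul_le_sq {l : List (ι → ℝ)} {S : Finset ι} (hS : l.length + 2 = #S)
    (hl : ∀ a ∈ l, ∀ i, 0 < a i) (x : ι → ℝ) {y : ι → ℝ} (hy : ∀ i, 0 < y i) :
    colPermanent (x :: x :: l) S * colPermanent (y :: y :: l) S ≤
      colPermanent (x :: y :: l) S ^ 2 := by
  induction l generalizing S x y with
  | nil => exact colPermanent_mul_le_sq_of_card_eq_two hS.symm x y
  | cons c l ih =>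
    obtain ⟨hc, hl'⟩ := List.forall_mem_cons.1 hl
    have pos_of_pos (a : ι → ℝ) (ha : ∀ i, 0 < a i) : 0 < colPermanent (y :: a :: c :: l) S :=
      colPermanent_pos hS (List.forall_mem_cons.2 ⟨hy, List.forall_mem_cons.2 ⟨ha, hl⟩⟩)
    simp only [← dotProduct_colPermanentForm_mulVec] at pos_of_pos ⊢
    refine mul_dotProduct_mulVec_le_sq (colPermanentForm_isSymm _ S)
      (p := colPermanentForm (c :: l) S *ᵥ S.restrict c) (fun w hw => ?_)
      (pos_of_pos c hc).ne' (pos_of_pos y hy).le _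
    refine colPermanent_self_nonpos_of_orthogonal hS hc hl' (fun i hi w => ih ?_ hl' w hc) hw
    rw [card_erase_of_mem hi, ← hS]
    rfl

lemma colPermanent_replicate_mul_le_sq {l : List (ι → ℝ)} {S : Finset ι} {y z : ι → ℝ}
    (hl : ∀ a ∈ l, ∀ i, 0 < a i) (hy : ∀ i, 0 < y i) (hz : ∀ i, 0 < z i) {i m : ℕ}
    (hS : i + m + 2 + l.length = #S) :
    colPermanent (List.replicate i y ++ (List.replicate (m + 2) z ++ l)) S *
        colPermanent (List.replicate (i + 2) y ++ (List.replicate m z ++ l)) S ≤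
      colPermanent (List.replicate (i + 1) y ++ (List.replicate (m + 1) z ++ l)) S ^ 2 := by
  let common := List.replicate i y ++ (List.replicate m z ++ l)
  have common_pos : ∀ a ∈ common, ∀ i, 0 < a i :=
    List.forall_mem_append.2 ⟨fun a ha => List.eq_of_mem_replicate ha ▸ hy,
      List.forall_mem_append.2 ⟨fun a ha => List.eq_of_mem_replicate ha ▸ hz, hl⟩⟩
  have zz_perm : (List.replicate i y ++ (List.replicate (m + 2) z ++ l)).Perm
      (z :: z :: common) :=
    List.perm_middle.trans (List.perm_middle.cons z)
  have zy_perm : (List.replicate (i + 1) y ++ (List.replicate (m + 1) z ++ l)).Perm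
      (z :: y :: common) :=
    (List.perm_middle.cons y).trans (List.Perm.swap z y _)
  rw [colPermanent_eq_of_perm zz_perm, colPermanent_eq_of_perm zy_perm]
  exact colPermanent_mul_le_sq (by simp [common]; omega) common_pos z hy

end ColPermanent

lemma le_mul_div_pow_of_mul_le_sq {𝕜 : Type*} [Field 𝕜] [LinearOrder 𝕜] [IsStrictOrderedRing 𝕜]
    {g : ℕ → 𝕜} {k : ℕ} (hpos : ∀ j ≤ k, 0 < g j)
    (hg : ∀ j, j + 2 ≤ k → g j * g (j + 2) ≤ g (j + 1) ^ 2) :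
    g k ≤ g 0 * (g 1 / g 0) ^ k := by
  have ratio_le (j : ℕ) (hj : j + 1 ≤ k) : g (j + 1) / g j ≤ g 1 / g 0 := by
    induction j with
    | zero => rfl
    | succ j ih =>
      refine le_trans ?_ (ih (by omega))
      rw [div_le_div_iff₀ (hpos _ (by omega)) (hpos _ (by omega))]
      linarith [hg j hj]
  have bound (j : ℕ) (hj : j ≤ k) : g j ≤ g 0 * (g 1 / g 0) ^ j := by
    induction j with
    | zero => simp
    | succ j ih =>
      have g_zero_pos := hpos 0 (Nat.zero_le k)
      have g_one_pos := hpos 1 (by omega)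
      calc
        g (j + 1) ≤ g j * (g 1 / g 0) :=
          (div_le_iff₀' (hpos j (by omega))).1 (ratio_le j hj)
        _ ≤ g 0 * (g 1 / g 0) ^ j * (g 1 / g 0) := by gcongr; exact ih (by omega)
        _ = g 0 * (g 1 / g 0) ^ (j + 1) := by ring
  exact bound k le_rfl

lemma mul_pow_div_pow_le_of_forall_mul_le {𝕜 : Type*} [Field 𝕜] [LinearOrder 𝕜]
    [IsStrictOrderedRing 𝕜] {p q K : 𝕜} (hp : 0 < p) (hq : 0 < q) {k : ℕ}
    (hk : 0 < k) (h : ∀ t > 0, K * t ≤ p * (1 + t * (q / p)) ^ (k + 1)) :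
    K * k ^ k / (k + 1) ^ (k + 1) ≤ q := by
  have : (0 : 𝕜) < k := Nat.cast_pos.2 hk
  -- `t = p / (k * q)` minimizes the right-hand side divided by `t`.
  have optimum := h (p / (k * q)) (by positivity)
  rw [show 1 + p / (k * q) * (q / p) = (k + 1) / k by field_simp, div_pow] at optimum
  rw [div_le_iff₀ (by positivity)]
  calc
    K * (k : 𝕜) ^ k = K * (p / (k * q)) * (q * k ^ (k + 1) / p) := by
      field_simp
      ring
    _ ≤ p * ((k + 1) ^ (k + 1) / k ^ (k + 1)) * (q * k ^ (k + 1) / p) := by gcongr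
    _ = q * (k + 1) ^ (k + 1) := by field_simp

section Capacity

variable {ι : Type*} [DecidableEq ι]

lemma colPermanent_replicate_append_le {l : List (ι → ℝ)} {S : Finset ι} {y z : ι → ℝ}
    (hl : ∀ a ∈ l, ∀ i, 0 < a i) (hy : ∀ i, 0 < y i) (hz : ∀ i, 0 < z i) {k : ℕ}
    (hS : k + 1 + l.length = #S) :
    colPermanent (List.replicate (k + 1) y ++ l) S ≤
      colPermanent (List.replicate (k + 1) z ++ l) S *
        (colPermanent (y :: (List.replicate k z ++ l)) S /
          colPermanent (List.replicate (k + 1) z ++ l) S) ^ (k + 1) := by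
  let g (j : ℕ) : ℝ :=
    colPermanent (List.replicate j y ++ (List.replicate (k + 1 - j) z ++ l)) S
  have g_pos (j) (hj : j ≤ k + 1) : 0 < g j := by
    refine colPermanent_pos (by simp; omega) (List.forall_mem_append.2 ⟨fun a ha => ?_,
      List.forall_mem_append.2 ⟨fun a ha => ?_, hl⟩⟩)
    exacts [List.eq_of_mem_replicate ha ▸ hy, List.eq_of_mem_replicate ha ▸ hz]
  have g_logConcave (j) (hj : j + 2 ≤ k + 1) : g j * g (j + 2) ≤ g (j + 1) ^ 2 := by
    obtain ⟨m, hm⟩ := Nat.exists_eq_add_of_le hj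
    have := colPermanent_replicate_mul_le_sq hl hy hz (S := S) (i := j) (m := m) (by omega)
    simpa only [g, show k + 1 - j = m + 2 by omega, show k + 1 - (j + 1) = m + 1 by omega,
      show k + 1 - (j + 2) = m by omega] using this
  simpa [g] using le_mul_div_pow_of_mul_le_sq g_pos g_logConcave

lemma colPermanent_cons_ge_of_capacity {a z : ι → ℝ} {l : List (ι → ℝ)} {S : Finset ι} {k : ℕ}
    (ha : ∀ i, 0 < a i) (hz : ∀ i, 0 < z i) (hl : ∀ b ∈ l, ∀ i, 0 < b i) (hk : 0 < k)
    (hS : k + 1 + l.length = #S) {K : ℝ}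
    (h : ∀ t > 0, K * t ≤ colPermanent (List.replicate (k + 1) (z + t • a) ++ l) S) :
    K * k ^ k / (k + 1) ^ (k + 1) ≤ colPermanent (a :: (List.replicate k z ++ l)) S := by
  have columns_pos (b : ι → ℝ) (hb : ∀ i, 0 < b i) :
      0 < colPermanent (b :: (List.replicate k z ++ l)) S :=
    colPermanent_pos (by simp; omega) (List.forall_mem_cons.2 ⟨hb,
      List.forall_mem_append.2 ⟨fun c hc => List.eq_of_mem_replicate hc ▸ hz, hl⟩⟩)
  have p_pos := columns_pos z hz
  refine mul_pow_div_pow_le_of_forall_mul_le p_pos (columns_pos a ha) hk fun t ht => ?_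
  have hy (i) : 0 < (z + t • a) i := add_pos (hz i) (mul_pos ht (ha i))
  refine (h t ht).trans ((colPermanent_replicate_append_le hl hy hz hS).trans_eq ?_)
  rw [colPermanent_add_smul, List.replicate_succ, List.cons_append, add_div, div_self p_pos.ne',
    mul_div_assoc]

theorem le_pow_mul_colPermanent_of_capacity {k : ℕ} {a : Fin k → ι → ℝ}
    (ha : ∀ j i, 0 < a j i) {l : List (ι → ℝ)} (hl : ∀ b ∈ l, ∀ i, 0 < b i) {S : Finset ι}
    (hS : k + l.length = #S) {K : ℝ}
    (h : ∀ x : Fin k → ℝ, (∀ j, 0 < x j) →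
      K * ∏ j, x j ≤ colPermanent (List.replicate k (∑ j, x j • a j) ++ l) S) :
    K ≤ k ^ k * colPermanent (List.ofFn a ++ l) S := by
  induction k generalizing l K with
  | zero => simpa using h 1 fun _ => one_pos
  | succ k ih =>
    rcases k.eq_zero_or_pos with rfl | hk
    · simpa using h 1 fun _ => one_pos
    have hcons : ∀ b ∈ a 0 :: l, ∀ i, 0 < b i := List.forall_mem_cons.2 ⟨ha 0, hl⟩
    have step : K * k ^ k / (k + 1) ^ (k + 1) ≤
        k ^ k * colPermanent (List.ofFn (fun j => a (Fin.succ j)) ++ a 0 :: l) S := by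
      refine ih (fun j => ha j.succ) hcons (by simp; omega) fun x hx => ?_
      have hz (i) : 0 < (∑ j, x j • a (Fin.succ j)) i := by
        rw [Finset.sum_apply]
        exact sum_pos (fun j _ => mul_pos (hx j) (ha _ i)) ⟨⟨0, hk⟩, mem_univ _⟩
      calc
        _ = K * (∏ j, x j) * k ^ k / (k + 1) ^ (k + 1) := by ring
        _ ≤ _ := colPermanent_cons_ge_of_capacity (ha 0) hz hl hk hS fun t ht => ?_
        _ = _ := (colPermanent_eq_of_perm List.perm_middle S).symm
      have h_cons := h (Fin.cons t x) (Fin.cases ht hx)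
      simp only [Fin.prod_univ_succ, Fin.sum_univ_succ, Fin.cons_zero, Fin.cons_succ] at h_cons
      rw [mul_assoc, mul_comm _ t, add_comm _ (t • a 0)]
      exact h_cons
    rw [div_le_iff₀ (by positivity), colPermanent_eq_of_perm List.perm_middle] at step
    rw [List.ofFn_succ, List.cons_append, Nat.cast_succ]
    exact le_of_mul_le_mul_right (by linarith) (pow_pos (Nat.cast_pos.2 hk) k)

end Capacity

section VanDerWaerden

variable {ι : Type*} [Fintype ι] [DecidableEq ι]

lemma mul_factorial_le_pow_mul_permanent_of_pos_of_capacity {A : Matrix ι ι ℝ}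
    (hA : ∀ i j, 0 < A i j) {K : ℝ}
    (h : ∀ x : ι → ℝ, (∀ j, 0 < x j) → K * ∏ j, x j ≤ ∏ i, (A *ᵥ x) i) :
    K * (Fintype.card ι).factorial ≤ Fintype.card ι ^ Fintype.card ι * A.permanent := by
  let e := (Fintype.equivFin ι).symm
  rw [permanent_eq_colPermanent A e, ← List.append_nil (List.ofFn _)]
  refine le_pow_mul_colPermanent_of_capacity (a := fun j => A.col (e j)) (fun j i => hA i (e j))
    (by simp) (by simp) fun x hx => ?_
  have columns_sum : ∑ j, x j • A.col (e j) = A *ᵥ (x ∘ e.symm) := by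
    ext i
    rw [Finset.sum_apply, mulVec, dotProduct, ← e.sum_comp]
    simp [mul_comm]
  rw [columns_sum, List.append_nil]
  calc
    _ = (Fintype.card ι).factorial * (K * ∏ j, (x ∘ e.symm) j) := by
      rw [← e.prod_comp]
      simp only [Function.comp_apply, e.symm_apply_apply]
      ring
    _ ≤ (Fintype.card ι).factorial * ∏ i, (A *ᵥ (x ∘ e.symm)) i := by
      gcongr
      exact h _ fun j => hx _
    _ = _ := (colPermanent_replicate _ univ).symm

theorem mul_factorial_le_pow_mul_permanent_of_capacity {A : Matrix ι ι ℝ}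
    (hA : ∀ i j, 0 ≤ A i j) {K : ℝ}
    (h : ∀ x : ι → ℝ, (∀ j, 0 < x j) → K * ∏ j, x j ≤ ∏ i, (A *ᵥ x) i) :
    K * (Fintype.card ι).factorial ≤ Fintype.card ι ^ Fintype.card ι * A.permanent := by
  let B (ε : ℝ) : Matrix ι ι ℝ := of fun i j => A i j + ε
  have perturbed : ∀ ε > 0, K * (Fintype.card ι).factorial ≤
      Fintype.card ι ^ Fintype.card ι * (B ε).permanent := fun ε hε => by
    refine mul_factorial_le_pow_mul_permanent_of_pos_of_capacity
      (fun i j => add_pos_of_nonneg_of_pos (hA i j) hε) fun x hx => (h x hx).trans ?_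
    refine prod_le_prod (fun i _ => sum_nonneg fun j _ => mul_nonneg (hA i j) (hx j).le)
      fun i _ => sum_le_sum fun j _ => mul_le_mul_of_nonneg_right ?_ (hx j).le
    exact le_add_of_nonneg_right hε.le
  have permanent_continuous : Continuous fun ε => (B ε).permanent := by
    simp only [permanent, B, of_apply]
    fun_prop
  have B_zero : B 0 = A := by ext; simp [B]
  have limit := (permanent_continuous.const_mul
    ((Fintype.card ι : ℝ) ^ Fintype.card ι)).continuousWithinAt (s := Set.Ioi 0) (x := 0)
  rw [← B_zero]
  exact ge_of_tendsto limit (by filter_upwards [self_mem_nhdsWithin] using perturbed)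

lemma prod_le_prod_mulVec_of_mem_doublyStochastic {A : Matrix ι ι ℝ}
    (hA : A ∈ doublyStochastic ℝ ι) {x : ι → ℝ} (hx : ∀ j, 0 < x j) :
    ∏ j, x j ≤ ∏ i, (A *ᵥ x) i := by
  calc
    ∏ j, x j = ∏ j, ∏ i, x j ^ A i j := prod_congr rfl fun j _ => by
      rw [← Real.rpow_sum_of_pos (hx j), sum_col_of_mem_doublyStochastic hA, Real.rpow_one]
    _ = ∏ i, ∏ j, x j ^ A i j := prod_comm
    _ ≤ ∏ i, (A *ᵥ x) i := prod_le_prod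
      (fun i _ => prod_nonneg fun j _ => Real.rpow_nonneg (hx j).le _) fun i _ =>
        Real.geom_mean_le_arith_mean_weighted univ (A i) x
          (fun j _ => nonneg_of_mem_doublyStochastic hA) (sum_row_of_mem_doublyStochastic hA i)
          fun j _ => (hx j).le

theorem factorial_le_pow_mul_permanent_of_mem_doublyStochastic {A : Matrix ι ι ℝ}
    (hA : A ∈ doublyStochastic ℝ ι) :
    ((Fintype.card ι).factorial : ℝ) ≤ Fintype.card ι ^ Fintype.card ι * A.permanent := by
  simpa using mul_factorial_le_pow_mul_permanent_of_capacity (K := 1)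
    (fun i j => nonneg_of_mem_doublyStochastic hA)
    fun x hx => by simpa using prod_le_prod_mulVec_of_mem_doublyStochastic hA hx

lemma permanent_boole (R : Type*) [CommSemiring R] (p : ι → ι → Prop) [∀ i j, Decidable (p i j)] :
    permanent (of fun i j => if p i j then (1 : R) else 0) =
      #{σ : Equiv.Perm ι | ∀ j, p (σ j) j} := by
  simp [permanent, prod_boole]

lemma factorial_mul_pow_le_card_perm_of_regular {p : ι → ι → Prop} [∀ i j, Decidable (p i j)]
    {d : ℕ} (hrow : ∀ i, #{j | p i j} = d) (hcol : ∀ j, #{i | p i j} = d) :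
    (Fintype.card ι).factorial * d ^ Fintype.card ι ≤
      Fintype.card ι ^ Fintype.card ι * #{σ : Equiv.Perm ι | ∀ j, p (σ j) j} := by
  rcases isEmpty_or_nonempty ι with _ | _
  · simp
  rcases d.eq_zero_or_pos with rfl | hd
  · simp
  have hd' : (d : ℝ) ≠ 0 := Nat.cast_ne_zero.2 hd.ne'
  let B : Matrix ι ι ℝ := of fun i j => if p i j then 1 else 0
  have doubly_stochastic : (d : ℝ)⁻¹ • B ∈ doublyStochastic ℝ ι := by
    refine mem_doublyStochastic_iff_sum.2 ⟨fun i j => ?_, fun i => ?_, fun j => ?_⟩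
    · simp only [B, Matrix.smul_apply, of_apply, smul_eq_mul]
      positivity
    · simp [B, ← sum_filter, hrow, hd']
    · simp [B, ← sum_filter, hcol, hd']
  have bound := factorial_le_pow_mul_permanent_of_mem_doublyStochastic doubly_stochastic
  rw [permanent_smul, permanent_boole, inv_pow, mul_left_comm, inv_mul_eq_div,
    le_div_iff₀ (by positivity)] at bound
  exact_mod_cast bound

end VanDerWaerden

section LatinRectangles

variable {ι : Type*} [Fintype ι] [DecidableEq ι]

variable (ι) in
/-- The Latin rectangles with `r` rows, whose columns and symbols are indexed by `ι`. Each row is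
encoded as the permutation of `ι` taking a column to its symbol. -/
def latinRectangles (r : ℕ) : Finset (Fin r → Equiv.Perm ι) :=
  {L | ∀ j, Function.Injective fun i => L i j}

lemma mem_latinRectangles {r : ℕ} {L : Fin r → Equiv.Perm ι} :
    L ∈ latinRectangles ι r ↔ ∀ j, Function.Injective fun i => L i j := by
  simp [latinRectangles]

lemma cons_mem_latinRectangles {r : ℕ} {σ : Equiv.Perm ι} {L : Fin r → Equiv.Perm ι} :
    (Fin.cons σ L : Fin (r + 1) → Equiv.Perm ι) ∈ latinRectangles ι (r + 1) ↔
      L ∈ latinRectangles ι r ∧ ∀ j i, L i j ≠ σ j := by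
  have column_cons (j : ι) : (fun i => (Fin.cons σ L : Fin (r + 1) → Equiv.Perm ι) i j) =
      Fin.cons (σ j) fun i => L i j :=
    funext fun i => by cases i using Fin.cases <;> rfl
  simp only [mem_latinRectangles, column_cons, Fin.cons_injective_iff, Set.mem_range, not_exists,
    forall_and]
  tauto

lemma card_latinRectangles_succ (r : ℕ) :
    #(latinRectangles ι (r + 1)) =
      ∑ L ∈ latinRectangles ι r, #{σ : Equiv.Perm ι | ∀ j i, L i j ≠ σ j} := by
  rw [← card_sigma]
  refine card_bij' (fun M _ => ⟨Fin.tail M, M 0⟩) (fun p _ => Fin.cons p.2 p.1) (fun M hM => ?_)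
    (fun p hp => ?_) (fun M _ => Fin.cons_self_tail M) (fun p _ => rfl)
  · rw [← Fin.cons_self_tail M, cons_mem_latinRectangles] at hM
    simpa using hM
  · rw [cons_mem_latinRectangles]
    simpa using hp

lemma factorial_mul_pow_le_card_extensions {r : ℕ} {L : Fin r → Equiv.Perm ι}
    (hL : L ∈ latinRectangles ι r) :
    (Fintype.card ι).factorial * (Fintype.card ι - r) ^ Fintype.card ι ≤
      Fintype.card ι ^ Fintype.card ι * #{σ : Equiv.Perm ι | ∀ j i, L i j ≠ σ j} := by
  rw [mem_latinRectangles] at hL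
  refine factorial_mul_pow_le_card_perm_of_regular (p := fun s j => ∀ i, L i j ≠ s)
    (fun s => ?_) (fun j => ?_)
  · have positions_injective : Function.Injective fun i => (L i).symm s := fun i i' h =>
      hL ((L i).symm s) <| by
        change L i _ = L i' _
        rw [Equiv.apply_symm_apply, show (L i).symm s = (L i').symm s from h,
          Equiv.apply_symm_apply]
    have unused_positions : ({j | ∀ i, L i j ≠ s} : Finset ι) =
        (univ.image fun i => (L i).symm s)ᶜ := by
      ext j
      simp [Equiv.symm_apply_eq, eq_comm (a := s)]
    rw [unused_positions, card_compl, card_image_of_injective _ positions_injective, card_fin]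
  · have unused_symbols : ({s | ∀ i, L i j ≠ s} : Finset ι) = (univ.image fun i => L i j)ᶜ := by
      ext s
      simp
    rw [unused_symbols, card_compl, card_image_of_injective _ (hL j), card_fin]

theorem factorial_pow_mul_descFactorial_pow_le_card_latinRectangles (r : ℕ) :
    (Fintype.card ι).factorial ^ r * (Fintype.card ι).descFactorial r ^ Fintype.card ι ≤
      (Fintype.card ι ^ Fintype.card ι) ^ r * #(latinRectangles ι r) := by
  induction r with
  | zero => simp [latinRectangles, Function.injective_of_subsingleton]
  | succ r ih =>
    set n := Fintype.card ι
    calc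
      n.factorial ^ (r + 1) * n.descFactorial (r + 1) ^ n =
          n.factorial ^ r * n.descFactorial r ^ n * (n.factorial * (n - r) ^ n) := by
        rw [Nat.descFactorial_succ]
        ring
      _ ≤ (n ^ n) ^ r * #(latinRectangles ι r) * (n.factorial * (n - r) ^ n) := by gcongr
      _ = (n ^ n) ^ r * ∑ _ ∈ latinRectangles ι r, n.factorial * (n - r) ^ n := by
        rw [sum_const, smul_eq_mul, mul_assoc]
      _ ≤ (n ^ n) ^ r * ∑ L ∈ latinRectangles ι r,
          n ^ n * #{σ : Equiv.Perm ι | ∀ j i, L i j ≠ σ j} :=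
        Nat.mul_le_mul_left _ (sum_le_sum fun _ => factorial_mul_pow_le_card_extensions)
      _ = (n ^ n) ^ (r + 1) * #(latinRectangles ι (r + 1)) := by
        rw [← mul_sum, ← card_latinRectangles_succ, pow_succ, mul_assoc]

lemma latinSquareCount_eq_card_latinRectangles (n : ℕ) :
    latinSquareCount n = #(latinRectangles (Fin n) n) := by
  rw [latinSquareCount, ← Nat.card_eq_finsetCard]
  exact Nat.card_congr
    { toFun := fun L => ⟨fun i => .ofBijective _ (L.2.1 i),
        mem_latinRectangles.2 fun j => (L.2.2 j).injective⟩
      invFun := fun L => ⟨fun i => L.1 i, fun i => (L.1 i).bijective,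
        fun j => Finite.injective_iff_bijective.1 (mem_latinRectangles.1 L.2 j)⟩
      left_inv := fun _ => rfl
      right_inv := fun _ => Subtype.ext <| funext fun _ => Equiv.ext fun _ => rfl }

end LatinRectangles

/-- for every n ≥ 1, L(n) ≥ (n!)^{2n} / n^{n²}. -/
theorem latin_square_count_lower_bound (n : ℕ) (hn : 1 ≤ n) :
    ((n.factorial : ℝ)) ^ (2 * n) / (n : ℝ) ^ (n ^ 2) ≤ (latinSquareCount n : ℝ) := by
  have bound : n.factorial ^ (2 * n) ≤ latinSquareCount n * n ^ n ^ 2 := by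
    have := factorial_pow_mul_descFactorial_pow_le_card_latinRectangles (ι := Fin n) n
    rwa [Fintype.card_fin, Nat.descFactorial_self, ← pow_add, ← two_mul, ← pow_mul, ← sq,
      ← latinSquareCount_eq_card_latinRectangles, mul_comm _ (latinSquareCount n)] at this
  rw [div_le_iff₀ (by positivity)]
  exact_mod_cast bound
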